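/- arXiv:2012.01958 — 12 statements merged into one kernel-verified Lean document; each statement's English description precedes it below -/
import Mathlib

section
/- Fix integers n ≥ 1, d ≥ 1 and natural numbers α_0,…,α_n. For every integer t ≥ 1 and every vector a = (a_0,…,a_n) ∈ ℕ^{n+1} with a_0+⋯+a_n = t·d and d ∣ α_0a_0+⋯+α_na_n, there exist vectors h_1,…,h_t ∈ ℕ^{n+1} with h_1+⋯+h_t = a such that for every j the coordinates of h_j sum to d and d divides α_0(h_j)_0+⋯+α_n(h_j)_n. Equivalently, every Λ-invariant monomial of degree td is a product of t Λ-invariant monomials of degree d. -/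
theorem egz_step (n d : ℕ) (hd : 1 ≤ d) (α : Fin (n + 1) → ℕ)
    (t : ℕ) (a : Fin (n + 1) → ℕ)
    (hsum : ∑ i, a i = (t + 1) * d) (hdiv : d ∣ ∑ i, α i * a i) :
    ∃ g : Fin (n + 1) → ℕ, (∀ i, g i ≤ a i) ∧ ∑ i, g i = d ∧ d ∣ ∑ i, α i * g i := by
  classical
  rcases Nat.eq_zero_or_pos t with rfl | ht
  · exact ⟨a, fun i => le_rfl, by simpa using hsum, hdiv⟩
  let s : Finset (Σ _ : Fin (n + 1), ℕ) := Finset.univ.sigma (fun i => Finset.range (a i))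
  have hs : 2 * d - 1 ≤ s.card := by
    have : s.card = (t + 1) * d := by simp [s, hsum]
    rw [this]
    have : 2 * d ≤ (t + 1) * d := Nat.mul_le_mul_right d (by omega)
    omega
  obtain ⟨u, hus, hu, hdu⟩ := Int.erdos_ginzburg_ziv (s := s) (fun x => (α x.1 : ℤ)) hs
  refine ⟨fun i => (u.filter (fun x => x.1 = i)).card, fun i => ?_, ?_, ?_⟩
  · have h1 : (u.filter (fun x => x.1 = i)) ⊆
        (Finset.range (a i)).image (fun k => (⟨i, k⟩ : Σ _ : Fin (n + 1), ℕ)) := by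
      rintro ⟨j, k⟩ hx
      rw [Finset.mem_filter] at hx
      obtain ⟨hx, rfl⟩ := hx
      have := hus hx
      simp only [s, Finset.mem_sigma] at this
      exact Finset.mem_image.2 ⟨k, this.2, rfl⟩
    calc _ ≤ _ := Finset.card_le_card h1
      _ ≤ _ := Finset.card_image_le
      _ = a i := by simp
  · rw [← hu]
    exact (Finset.card_eq_sum_card_fiberwise (fun x _ => Finset.mem_univ _)).symm
  · have h2 : ∑ i, α i * (u.filter (fun x => x.1 = i)).card = ∑ x ∈ u, α x.1 := by
      rw [← Finset.sum_fiberwise u (fun x => x.1)]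
      refine Finset.sum_congr rfl fun i _ => ?_
      rw [Finset.sum_congr rfl (g := fun _ => α i)]
      · simp [mul_comm]
      · intro x hx
        rw [(Finset.mem_filter.1 hx).2]
    rw [h2]
    exact_mod_cast hdu

theorem egz_all (n d : ℕ) (hd : 1 ≤ d) (α : Fin (n + 1) → ℕ)
    (t : ℕ) : ∀ (a : Fin (n + 1) → ℕ)
    (_ : ∑ i, a i = t * d) (_ : d ∣ ∑ i, α i * a i),
    ∃ h : Fin t → (Fin (n + 1) → ℕ),
      (∑ j, h j) = a ∧
      ∀ j : Fin t, (∑ i, h j i = d) ∧ d ∣ ∑ i, α i * h j i := by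
  induction t with
  | zero =>
    intro a hsum _
    refine ⟨fun _ => 0, ?_, fun j => j.elim0⟩
    funext i
    simp at hsum
    simp [hsum]
  | succ t ih =>
    intro a hsum hdiv
    obtain ⟨g, hg, hgs, hgd⟩ := egz_step n d hd α t a hsum hdiv
    obtain ⟨b, rfl⟩ : ∃ b, a = g + b := ⟨a - g, by funext i; simp [hg i]⟩
    simp only [Pi.add_apply, mul_add, Finset.sum_add_distrib] at hsum hdiv
    obtain ⟨h, hh, hj⟩ := ih b (by rw [hgs, add_mul] at hsum; omega)
      ((Nat.dvd_add_right hgd).1 hdiv)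
    refine ⟨Fin.cons g h, by simp [Fin.sum_univ_succ, hh], fun j => ?_⟩
    refine Fin.cases ?_ (fun j => ?_) j
    · exact ⟨hgs, hgd⟩
    · exact hj j

/-- Every Λ-invariant monomial of degree t·d is a product of t Λ-invariant
monomials of degree d (Theorem 3.1 of the paper, exponent-vector form). -/
theorem stmt0 (n d : ℕ) (hn : 1 ≤ n) (hd : 1 ≤ d) (α : Fin (n + 1) → ℕ)
    (t : ℕ) (ht : 1 ≤ t) (a : Fin (n + 1) → ℕ)
    (hsum : ∑ i, a i = t * d) (hdiv : d ∣ ∑ i, α i * a i) :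
    ∃ h : Fin t → (Fin (n + 1) → ℕ),
      (∑ j, h j) = a ∧
      ∀ j : Fin t, (∑ i, h j i = d) ∧ d ∣ ∑ i, α i * h j i :=
  egz_all n d hd α t a hsum hdiv
end

section
/- Fix integers n ≥ 1, d ≥ 1 and natural numbers α_0,…,α_n. If a ∈ ℕ^{n+1} satisfies a_0+⋯+a_n ≥ 2d−1, then there exists b ∈ ℕ^{n+1} with b_i ≤ a_i for every i, b_0+⋯+b_n = d, and d ∣ α_0b_0+⋯+α_nb_n. -/
/-- Erdős–Ginzburg–Ziv step: any exponent vector of degree at least 2d−1 dominates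
a Λ-invariant exponent vector of degree exactly d (key step in Theorem 3.1). -/
theorem stmt1 (n d : ℕ) (hn : 1 ≤ n) (hd : 1 ≤ d) (α : Fin (n + 1) → ℕ)
    (a : Fin (n + 1) → ℕ) (ha : 2 * d - 1 ≤ ∑ i, a i) :
    ∃ b : Fin (n + 1) → ℕ,
      (∀ i, b i ≤ a i) ∧ (∑ i, b i = d) ∧ d ∣ ∑ i, α i * b i := by
  classical
  obtain ⟨t, -, htc, htd⟩ := Int.erdos_ginzburg_ziv (n := d)
    (s := (Finset.univ : Finset (Σ i, Fin (a i)))) (fun x => (α x.1 : ℤ)) (by simpa using ha)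
  refine ⟨fun i => (t.filter (fun x => x.1 = i)).card, fun i => ?_, ?_, ?_⟩
  · have h : t.filter (fun x => x.1 = i) ⊆
        (Finset.univ : Finset (Fin (a i))).image (fun j => (⟨i, j⟩ : Σ i, Fin (a i))) := by
      rintro ⟨k, j⟩ hx
      obtain rfl : k = i := (Finset.mem_filter.1 hx).2
      simp
    exact (Finset.card_le_card h).trans (Finset.card_image_le.trans (by simp))
  · rw [← htc]
    exact (Finset.card_eq_sum_card_fiberwise (fun x _ => Finset.mem_coe.2 (Finset.mem_univ x.1))).symm
  · have h : ∑ x ∈ t, α x.1 = ∑ i, α i * (t.filter (fun x => x.1 = i)).card := by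
      rw [← Finset.sum_fiberwise t (fun x => x.1)]
      refine Finset.sum_congr rfl fun i _ => ?_
      rw [Finset.sum_congr rfl (g := fun _ => α i)
        (fun x hx => by rw [(Finset.mem_filter.1 hx).2])]
      simp [mul_comm]
    rw [← h]
    exact_mod_cast htd
end

section
/- Let d ≥ 1, let e ∈ ℂ be a primitive d-th root of unity and α_0,…,α_n ∈ ℕ. Let A be the ℂ-subalgebra of ℂ[x_0,…,x_n] generated by the monomials x^a with |a| = d and d ∣ ⟨α,a⟩. Then a polynomial p belongs to A if and only if p is fixed by both algebra endomorphisms given by the substitutions x_i ↦ e^{α_i}·x_i and x_i ↦ e·x_i. -/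
open MvPolynomial

lemma egz_sub (n d : ℕ) (α a : Fin (n + 1) → ℕ) (h : 2 * d - 1 ≤ ∑ i, a i) :
    ∃ b : Fin (n + 1) → ℕ, (∀ i, b i ≤ a i) ∧ ∑ i, b i = d ∧ d ∣ ∑ i, α i * b i := by
  classical
  obtain ⟨t, hts, htc, htd⟩ := Int.erdos_ginzburg_ziv
    (s := (Finset.univ : Finset (Fin (n+1))).sigma (fun i => Finset.range (a i)))
    (n := d) (fun x => (α x.1 : ℤ)) (by simpa using h)
  refine ⟨fun i => (t.filter (fun x => x.1 = i)).card, ?_, ?_, ?_⟩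
  · intro i
    have : (t.filter (fun x => x.1 = i)) ⊆ (Finset.range (a i)).map
        (Function.Embedding.sigmaMk (β := fun _ : Fin (n+1) => ℕ) i) := by
      rintro ⟨j, y⟩ hx
      simp only [Finset.mem_filter] at hx
      obtain ⟨h1, rfl⟩ := hx
      have := hts h1
      simp at this
      simpa using this
    simpa using Finset.card_le_card this
  · rw [← htc]
    exact (Finset.card_eq_sum_card_fiberwise (s := t) (f := Sigma.fst) (t := Finset.univ)
      (by simp)).symm
  · have : ∑ x ∈ t, α x.1 = ∑ i, α i * (t.filter (fun x => x.1 = i)).card := by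
      rw [← Finset.sum_fiberwise t (fun x => x.1)]
      refine Finset.sum_congr rfl fun i _ => ?_
      rw [Finset.sum_congr rfl (g := fun _ => α i)]
      · simp [mul_comm]
      · intro x hx
        rw [(Finset.mem_filter.1 hx).2]
    rw [← this]
    exact_mod_cast htd

lemma mon_mem (n d : ℕ) (α : Fin (n + 1) → ℕ) (k : ℕ) :
    ∀ a : Fin (n + 1) → ℕ, ∑ i, a i = k * d → d ∣ ∑ i, α i * a i →
    (∏ i, X i ^ a i : MvPolynomial (Fin (n + 1)) ℂ) ∈
      Algebra.adjoin ℂ { q : MvPolynomial (Fin (n + 1)) ℂ |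
        ∃ a : Fin (n + 1) → ℕ,
          (∑ i, a i = d) ∧ (d ∣ ∑ i, α i * a i) ∧ q = ∏ i, X i ^ a i } := by
  induction k with
  | zero =>
    intro a h _
    have h0 : ∀ i, a i = 0 := by simpa using h
    simp [h0, one_mem]
  | succ k ih =>
    intro a h hα
    rcases Nat.eq_zero_or_pos k with rfl | hk
    · exact Algebra.subset_adjoin ⟨a, by simpa using h, hα, rfl⟩
    obtain ⟨b, hb, hbd, hbα⟩ := egz_sub n d α a (by rw [h]; have := Nat.mul_le_mul_right d hk; have h2 := Nat.succ_mul k d; simp only [Nat.succ_eq_add_one, zero_add, one_mul] at this h2; omega)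
    obtain ⟨c, rfl⟩ : ∃ c : Fin (n+1) → ℕ, a = b + c :=
      ⟨a - b, by funext i; have := hb i; simp; omega⟩
    simp only [Pi.add_apply, Finset.sum_add_distrib, mul_add, pow_add,
      Finset.prod_mul_distrib] at h hα ⊢
    refine mul_mem (Algebra.subset_adjoin ⟨b, hbd, hbα, rfl⟩) (ih c ?_ ?_)
    · rw [hbd, Nat.succ_mul] at h; omega
    · exact (Nat.dvd_add_right hbα).1 hα

lemma coeff_scale (n : ℕ) (c : Fin (n + 1) → ℂ) (p : MvPolynomial (Fin (n + 1)) ℂ)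
    (m : Fin (n + 1) →₀ ℕ) :
    coeff m (aeval (fun i => C (c i) * X i) p) = (∏ i, c i ^ m i) * coeff m p := by
  classical
  induction p using MvPolynomial.induction_on' with
  | add p q hp hq => simp only [map_add, coeff_add, hp, hq, mul_add]
  | monomial u a =>
    have : aeval (fun i => C (c i) * X i : Fin (n+1) → MvPolynomial (Fin (n + 1)) ℂ)
        (monomial u a) = monomial u ((∏ i, c i ^ u i) * a) := by
      rw [aeval_monomial, Finsupp.prod_fintype _ _ (by simp), monomial_eq,
        Finsupp.prod_fintype _ _ (by simp)]
      simp only [mul_pow, Finset.prod_mul_distrib, map_mul, map_prod, map_pow, algebraMap_eq]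
      ring
    rw [this, coeff_monomial, coeff_monomial]
    split_ifs with h
    · rw [h]
    · simp

/-- The degree-d Λ-invariant monomials generate the ring of invariants of the
abelian group Λ̄ generated by the substitutions xᵢ ↦ e^{αᵢ}·xᵢ and xᵢ ↦ e·xᵢ
(Theorems 3.1 and 3.3 of the paper). -/
theorem stmt2 (n d : ℕ) (hn : 1 ≤ n) (hd : 1 ≤ d) (e : ℂ)
    (he : IsPrimitiveRoot e d) (α : Fin (n + 1) → ℕ)
    (p : MvPolynomial (Fin (n + 1)) ℂ) :
    p ∈ Algebra.adjoin ℂ { q : MvPolynomial (Fin (n + 1)) ℂ |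
        ∃ a : Fin (n + 1) → ℕ,
          (∑ i, a i = d) ∧ (d ∣ ∑ i, α i * a i) ∧ q = ∏ i, X i ^ a i } ↔
      (aeval (fun i => C (e ^ α i) * X i) p = p ∧
        aeval (fun i => C e * X i) p = p) := by
  constructor
  · intro hp
    induction hp using Algebra.adjoin_induction with
    | mem x hx =>
      obtain ⟨a, h1, h2, rfl⟩ := hx
      constructor
      · simp only [map_prod, map_pow, aeval_X, mul_pow, Finset.prod_mul_distrib]
        simp only [← map_pow, ← map_prod, ← pow_mul, Finset.prod_pow_eq_pow_sum]
        rw [(he.pow_eq_one_iff_dvd _).2 h2]; simp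
      · simp only [map_prod, map_pow, aeval_X, mul_pow, Finset.prod_mul_distrib]
        simp only [← map_pow, ← map_prod, Finset.prod_pow_eq_pow_sum]
        rw [h1, he.pow_eq_one]; simp
    | algebraMap r => simp [algebraMap_eq]
    | add x y _ _ hx hy => exact ⟨by rw [map_add, hx.1, hy.1], by rw [map_add, hx.2, hy.2]⟩
    | mul x y _ _ hx hy => exact ⟨by rw [map_mul, hx.1, hy.1], by rw [map_mul, hx.2, hy.2]⟩
  · rintro ⟨h1, h2⟩
    rw [p.as_sum]
    refine Subalgebra.sum_mem _ fun m hm => ?_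
    have hm0 : coeff m p ≠ 0 := mem_support_iff.1 hm
    have e1 := coeff_scale n (fun i => e ^ α i) p m
    have e2 := coeff_scale n (fun _ => e) p m
    rw [h1] at e1
    rw [h2] at e2
    have e1 := (mul_eq_right₀ hm0).1 e1.symm
    have e2 := (mul_eq_right₀ hm0).1 e2.symm
    simp only [← pow_mul, Finset.prod_pow_eq_pow_sum] at e1 e2
    rw [he.pow_eq_one_iff_dvd] at e1 e2
    obtain ⟨k, hk⟩ := e2
    rw [monomial_eq, Finsupp.prod_fintype _ _ (by simp)]
    exact mul_mem (Subalgebra.algebraMap_mem _ _) (mon_mem n d α k m (by rw [hk, mul_comm]) e1)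
end

section
/- Let d ≥ 2, let e ∈ ℂ be a primitive d-th root of unity, α_0,…,α_n ∈ ℕ, and let I_d ⊆ ℂ[x_0,…,x_n] be the ideal generated by all monomials x^a with |a| = d and d ∣ ⟨α,a⟩. Then the polynomial p = ∏_{j=1}^{d−1}(e^{jα_0}x_0 + ⋯ + e^{jα_n}x_n) is nonzero and does not belong to I_d, while (x_0+⋯+x_n)·p belongs to I_d. In particular, multiplication by the linear form x_0+⋯+x_n from the degree d−1 part to the degree d part of ℂ[x_0,…,x_n]/I_d is not injective. -/
open MvPolynomial

theorem aux_coeff {n : ℕ} (c : Fin (n + 1) → ℂ) (f : MvPolynomial (Fin (n + 1)) ℂ)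
    (a : Fin (n + 1) →₀ ℕ) :
    coeff a (aeval (fun i => C (c i) * X i : Fin (n + 1) → MvPolynomial (Fin (n + 1)) ℂ) f)
      = (∏ i, c i ^ a i) * coeff a f := by
  induction f using MvPolynomial.induction_on' with
  | monomial u r =>
    have h : aeval (fun i => C (c i) * X i : Fin (n + 1) → MvPolynomial (Fin (n + 1)) ℂ)
        (monomial u r) = monomial u ((∏ i, c i ^ u i) * r) := by
      rw [aeval_monomial, Finsupp.prod_fintype _ _ (by simp)]
      simp only [mul_pow, Finset.prod_mul_distrib, algebraMap_eq]
      rw [monomial_eq, Finsupp.prod_fintype _ _ (by simp), C_mul, map_prod]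
      simp only [C_pow]
      ring
    rw [h, coeff_monomial, coeff_monomial]
    split_ifs with h'
    · rw [h']
    · simp
  | add p q hp hq => rw [map_add, coeff_add, coeff_add, hp, hq, mul_add]

/-- Corollary 3.5: the product p = ∏_{j=1}^{d−1}(e^{jα₀}x₀+⋯+e^{jαₙ}xₙ) is a nonzero
polynomial not in I_d, while (x₀+⋯+xₙ)·p ∈ I_d; hence multiplication by the linear
form x₀+⋯+xₙ on R/I_d is not injective from degree d−1 to degree d. -/
theorem stmt3 (n d : ℕ) (hn : 1 ≤ n) (hd : 2 ≤ d) (e : ℂ)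
    (he : IsPrimitiveRoot e d) (α : Fin (n + 1) → ℕ) :
    let I : Ideal (MvPolynomial (Fin (n + 1)) ℂ) :=
      Ideal.span { q : MvPolynomial (Fin (n + 1)) ℂ |
        ∃ a : Fin (n + 1) → ℕ,
          (∑ i, a i = d) ∧ (d ∣ ∑ i, α i * a i) ∧ q = ∏ i, X i ^ a i }
    let p : MvPolynomial (Fin (n + 1)) ℂ :=
      ∏ j ∈ Finset.Icc 1 (d - 1), (∑ i, C (e ^ (j * α i)) * X i)
    p ≠ 0 ∧ p ∉ I ∧ (∑ i, X i) * p ∈ I := by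
  intro I p
  let L : ℕ → MvPolynomial (Fin (n + 1)) ℂ := fun j => ∑ i, C (e ^ (j * α i)) * X i
  have he0 : e ≠ 0 := he.ne_zero (by omega)
  have hL : ∀ j, (L j).IsHomogeneous 1 := fun j =>
    IsHomogeneous.sum _ _ _ fun i _ => by
      simpa using (isHomogeneous_C (Fin (n+1)) (e ^ (j * α i))).mul (isHomogeneous_X ℂ i)
  have hL0 : ∀ j, L j ≠ 0 := by
    intro j h
    have := congrArg (eval (Pi.single 0 1 : Fin (n+1) → ℂ)) h
    simp [L, Pi.single_apply, he0] at this
  have hI : I = Ideal.span ((fun s => monomial s (1:ℂ)) ''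
      {a : Fin (n+1) →₀ ℕ | (∑ i, a i = d) ∧ (d ∣ ∑ i, α i * a i)}) := by
    refine congrArg Ideal.span ?_
    ext q
    constructor
    · rintro ⟨a, h1, h2, rfl⟩
      refine ⟨Finsupp.equivFunOnFinite.symm a, ⟨by simpa using h1, by simpa using h2⟩, ?_⟩
      simp [monomial_eq, Finsupp.prod_fintype]
    · rintro ⟨a, ⟨h1, h2⟩, rfl⟩
      refine ⟨a, h1, h2, ?_⟩
      simp [monomial_eq, Finsupp.prod_fintype]
  have hp0 : p ≠ 0 := Finset.prod_ne_zero_iff.2 fun j _ => hL0 j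
  have hph : p.IsHomogeneous (d - 1) := by
    simpa using IsHomogeneous.prod (Finset.Icc 1 (d-1)) L (fun _ => 1) fun j _ => hL j
  have hdeg : ∀ {f : MvPolynomial (Fin (n+1)) ℂ} {m : ℕ}, f.IsHomogeneous m →
      ∀ a ∈ f.support, ∑ i, a i = m := by
    intro f m hf a ha
    have := hf (mem_support_iff.1 ha)
    rw [← this, Finsupp.weight_apply, Finsupp.sum_fintype _ _ (by simp)]
    simp
  refine ⟨hp0, ?_, ?_⟩
  · rw [hI, mem_ideal_span_monomial_image]
    intro h
    obtain ⟨a, ha⟩ := support_nonempty.2 hp0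
    obtain ⟨s, ⟨hs, _⟩, hle⟩ := h a ha
    have h1 := hdeg hph a ha
    have h2 : ∑ i, s i ≤ ∑ i, a i := Finset.sum_le_sum fun i _ => hle i
    omega
  · have hq : (∑ i, X i) * p = ∏ j ∈ Finset.range d, L j := by
      obtain ⟨k, rfl⟩ : ∃ k, d = k + 1 := ⟨d - 1, by omega⟩
      rw [Finset.prod_range_succ', mul_comm]
      congr 1
      · show ∏ j ∈ Finset.Icc 1 (k + 1 - 1), L j = _
        rw [Finset.range_eq_Ico, Finset.prod_Ico_add' L 0 k 1]
        rfl
      · simp [L]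
    rw [hq, hI, mem_ideal_span_monomial_image]
    intro a ha
    refine ⟨a, ⟨?_, ?_⟩, le_rfl⟩
    · refine hdeg ?_ a ha
      simpa using IsHomogeneous.prod (Finset.range d) L (fun _ => 1) fun j _ => hL j
    · have hφ : ∀ j, aeval (fun i => C (e ^ α i) * X i :
          Fin (n + 1) → MvPolynomial (Fin (n + 1)) ℂ) (L j) = L (j + 1) := by
        intro j
        simp only [L, map_sum, map_mul, aeval_X, algHom_C, algebraMap_eq]
        refine Finset.sum_congr rfl fun i _ => ?_
        rw [← mul_assoc, ← C_mul, ← pow_add, add_mul, one_mul]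
      have hLd : L d = L 0 := by
        simp only [L, pow_mul, he.pow_eq_one, one_pow, pow_zero]
      have hinv := aux_coeff (fun i => e ^ α i) (∏ j ∈ Finset.range d, L j) a
      have : ∏ j ∈ Finset.range d, L (j+1) = ∏ j ∈ Finset.range d, L j := by
        have h1 := Finset.prod_range_succ L d
        rw [Finset.prod_range_succ', hLd] at h1
        exact mul_right_cancel₀ (hL0 0) h1
      rw [map_prod] at hinv
      simp only [hφ] at hinv
      rw [this] at hinv
      have h1 := (mul_eq_right₀ (mem_support_iff.1 ha)).1 hinv.symm
      simp only [← pow_mul, Finset.prod_pow_eq_pow_sum] at h1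
      exact he.dvd_of_pow_eq_one _ h1
end

section
/- Fix an integer d ≥ 3 and integers a, b with 0 < a < b < d and gcd(a,b,d) = 1. Set g = gcd(a,d), a' = a/g, d' = d/g, and let λ be the unique integer with 0 < λ ≤ d' and b ≡ λ·a' (mod d'). Then for every t ≥ 1, #{(y₀,y₁,y₂) ∈ ℕ³ : y₀+y₁+y₂ = t·d and d ∣ a·y₁ + b·y₂} = #{(y₀,y₁,y₂) ∈ ℕ³ : y₀+y₁+y₂ = t·d, d' ∣ y₁ + λ·y₂, and y₁ + g·y₂ ≤ t·d}. -/
/-- Lemma 4.9: the number of Λ-invariant monomials of degree t·d equals the number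
of solutions of the reduced systems (**) satisfying y₁ + gcd(a,d)·y₂ ≤ t·d. -/
theorem stmt6 (d a b : ℕ) (hd : 3 ≤ d) (ha : 0 < a) (hab : a < b) (hbd : b < d)
    (hgcd : Nat.gcd a (Nat.gcd b d) = 1)
    (lam : ℕ) (hlam0 : 0 < lam) (hlamle : lam ≤ d / Nat.gcd a d)
    (hlamcong : b ≡ lam * (a / Nat.gcd a d) [MOD d / Nat.gcd a d])
    (t : ℕ) (ht : 1 ≤ t) :
    Set.ncard {y : ℕ × ℕ × ℕ |
        y.1 + y.2.1 + y.2.2 = t * d ∧ d ∣ a * y.2.1 + b * y.2.2} =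
      Set.ncard {y : ℕ × ℕ × ℕ |
        y.1 + y.2.1 + y.2.2 = t * d ∧
        (d / Nat.gcd a d) ∣ y.2.1 + lam * y.2.2 ∧
        y.2.1 + Nat.gcd a d * y.2.2 ≤ t * d} := by
  have hg : 0 < Nat.gcd a d := Nat.gcd_pos_of_pos_left _ ha
  have hcop : Nat.Coprime (a / Nat.gcd a d) (d / Nat.gcd a d) := Nat.coprime_div_gcd_div_gcd hg
  have hgb : Nat.Coprime (Nat.gcd a d) b := by
    unfold Nat.Coprime
    rw [Nat.gcd_assoc, Nat.gcd_comm d b]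
    exact hgcd
  have hda : Nat.gcd a d * (a / Nat.gcd a d) = a := Nat.mul_div_cancel' (Nat.gcd_dvd_left a d)
  have hdd : Nat.gcd a d * (d / Nat.gcd a d) = d := Nat.mul_div_cancel' (Nat.gcd_dvd_right a d)
  have hga := Nat.gcd_dvd_left a d
  have hgd := Nat.gcd_dvd_right a d
  generalize Nat.gcd a d = g at *
  generalize a / g = a' at *
  generalize d / g = d' at *
  have key : ∀ y z : ℕ, d ∣ a * y + b * (g * z) ↔ d' ∣ y + lam * z := by
    intro y z
    have e : a * y + b * (g * z) = g * (a' * y + b * z) := by rw [← hda]; ring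
    rw [e, ← hdd, Nat.mul_dvd_mul_iff_left hg]
    have h1 : a' * y + b * z ≡ a' * (y + lam * z) [MOD d'] := by
      have h2 := (hlamcong.mul_right z).add_left (a' * y)
      have e2 : a' * (y + lam * z) = a' * y + lam * a' * z := by ring
      rw [e2]
      exact h2
    rw [h1.dvd_iff dvd_rfl]
    exact hcop.symm.dvd_mul_left
  symm
  rw [← Set.ncard_image_of_injOn (f := fun y : ℕ × ℕ × ℕ =>
    (t * d - y.2.1 - g * y.2.2, y.2.1, g * y.2.2))]
  · congr 1
    ext ⟨y0, y1, y2⟩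
    simp only [Set.mem_image, Set.mem_setOf_eq, Prod.exists, Prod.mk.injEq]
    constructor
    · rintro ⟨x0, x1, x2, ⟨h1, h2, h3⟩, h4, rfl, rfl⟩
      exact ⟨by omega, (key _ _).2 h2⟩
    · rintro ⟨h1, h2⟩
      have h3 : g ∣ y2 := by
        have h4 : g ∣ b * y2 :=
          (Nat.dvd_add_right (hga.mul_right y1)).1 (hgd.trans h2)
        exact hgb.dvd_of_dvd_mul_left h4
      obtain ⟨z, rfl⟩ := h3
      have hz : z ≤ g * z := Nat.le_mul_of_pos_left z hg
      exact ⟨t * d - y1 - z, y1, z, ⟨by omega, (key _ _).1 h2, by omega⟩, by omega, rfl, rfl⟩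
  · rintro ⟨x0, x1, x2⟩ ⟨h1, -, -⟩ ⟨y0, y1, y2⟩ ⟨k1, -, -⟩ h
    simp only [Prod.mk.injEq] at h h1 k1 ⊢
    obtain ⟨-, h5, h6⟩ := h
    have := Nat.eq_of_mul_eq_mul_left hg h6
    exact ⟨by omega, h5, this⟩
end

section
/- Fix an integer d ≥ 3 and integers a, b with 0 < a < b < d and gcd(a,b,d) = 1. Set g = gcd(a,d), a' = a/g, d' = d/g, let λ be the unique integer with 0 < λ ≤ d' and b ≡ λ·a' (mod d'), and put θ = g + gcd(λ, d') + gcd(λ − g, d') (the last gcd taken of integers, nonnegative). Then for every t ≥ 0, 2 · #{(y₀,y₁,y₂) ∈ ℕ³ : y₀+y₁+y₂ = t·d and d ∣ a·y₁ + b·y₂} = d·t² + θ·t + 2. -/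
open Finset in
theorem aux_periodic (d : ℕ) (f : ℕ → ℕ) (hf : ∀ x, f (x + d) = f x) (t : ℕ) :
    ∑ x ∈ range (t * d), f x = t * ∑ x ∈ range d, f x := by
  have hf' : ∀ k x, f (k * d + x) = f x := by
    intro k
    induction k with
    | zero => intro x; simp
    | succ k ih =>
      intro x
      rw [show (k + 1) * d + x = (k * d + x) + d by ring, hf, ih]
  induction t with
  | zero => simp
  | succ k ih =>
    rw [Nat.succ_mul, Finset.sum_range_add, ih, Nat.succ_mul]
    simp [hf']

open Finset in
theorem aux_line (d k : ℕ) (hd : 0 < d) :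
    ∑ x ∈ range d, (if d ∣ k * x then 1 else 0) = Nat.gcd k d := by
  obtain ⟨e, he⟩ := Nat.gcd_dvd_right k d
  have hg : 0 < Nat.gcd k d := Nat.gcd_pos_of_pos_right k hd
  have he0 : 0 < e := by
    rcases Nat.eq_zero_or_pos e with h | h
    · rw [h] at he; omega
    · exact h
  have key : ∀ x, d ∣ k * x ↔ e ∣ x := by
    intro x
    have hc : Nat.Coprime (k / Nat.gcd k d) (d / Nat.gcd k d) := Nat.coprime_div_gcd_div_gcd hg
    have h1 : d / Nat.gcd k d = e := Nat.div_eq_of_eq_mul_right hg he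
    rw [h1] at hc
    obtain ⟨k', hk'⟩ := Nat.gcd_dvd_left k d
    have h2 : k / Nat.gcd k d = k' := Nat.div_eq_of_eq_mul_right hg hk'
    rw [h2] at hc
    have : d ∣ k * x ↔ Nat.gcd k d * e ∣ Nat.gcd k d * (k' * x) := by
      rw [← he, ← mul_assoc, ← hk']
    rw [this, Nat.mul_dvd_mul_iff_left hg]
    exact hc.symm.dvd_mul_left
  simp only [key]
  generalize Nat.gcd k d = g at *
  subst he
  rw [aux_periodic e (fun x => if e ∣ x then 1 else 0) (by simp)]
  have : ∑ x ∈ range e, (if e ∣ x then 1 else 0) = 1 := by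
    rw [Finset.sum_eq_single 0]
    · simp
    · intro b hb hb0
      rw [if_neg]
      intro h
      have := Nat.le_of_dvd (Nat.pos_of_ne_zero hb0) h
      rw [mem_range] at hb
      omega
    · intro h; simp at h; omega
  rw [this, mul_one]

open Finset in
theorem aux_square (d a b : ℕ) (hd : 0 < d) (hgcd : Nat.gcd a (Nat.gcd b d) = 1) :
    ∑ x ∈ range d, ∑ y ∈ range d, (if d ∣ a * x + b * y then 1 else 0) = d := by
  haveI : NeZero d := ⟨hd.ne'⟩
  let φ : ZMod d × ZMod d →+ ZMod d :=
    { toFun := fun p => a * p.1 + b * p.2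
      map_zero' := by simp
      map_add' := by intro p q; simp only [Prod.fst_add, Prod.snd_add]; ring }
  have hsurj : Function.Surjective φ := by
    intro z
    have h1 := Nat.gcd_eq_gcd_ab a (Nat.gcd b d)
    have h2 := Nat.gcd_eq_gcd_ab b d
    rw [h2, hgcd] at h1
    have h3 := congrArg (Int.cast : ℤ → ZMod d) h1
    push_cast at h3
    simp only [CharP.cast_eq_zero, zero_mul, add_zero] at h3
    refine ⟨((Nat.gcdA a (Nat.gcd b d) : ℤ) * z,
      (Nat.gcdA b d : ℤ) * (Nat.gcdB a (Nat.gcd b d) : ℤ) * z), ?_⟩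
    change (a : ZMod d) * _ + b * _ = z
    linear_combination (-z) * h3
  have hker : Nat.card φ.ker = d := by
    have h1 := AddSubgroup.card_mul_index φ.ker
    rw [AddSubgroup.index_ker, AddMonoidHom.range_eq_top.mpr hsurj] at h1
    simp only [AddSubgroup.card_top, Nat.card_prod, Nat.card_zmod] at h1
    exact Nat.eq_of_mul_eq_mul_right hd h1
  rw [← Finset.sum_product', Finset.sum_boole, Nat.cast_id]
  refine Eq.trans ?_ hker
  rw [Nat.card_eq_fintype_card, Fintype.card_subtype]
  refine Finset.card_bij (fun p _ => ((p.1 : ZMod d), (p.2 : ZMod d))) ?_ ?_ ?_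
  · rintro ⟨x, y⟩ h
    simp only [mem_filter, mem_product, mem_range] at h
    simp only [mem_filter, mem_univ, true_and, AddMonoidHom.mem_ker]
    change (a : ZMod d) * x + b * y = 0
    exact_mod_cast (ZMod.natCast_eq_zero_iff _ _).mpr h.2
  · rintro ⟨x, y⟩ h ⟨x', y'⟩ h' heq
    simp only [mem_filter, mem_product, mem_range] at h h'
    simp only [Prod.mk.injEq, ZMod.natCast_eq_natCast_iff'] at heq
    rw [Nat.mod_eq_of_lt h.1.1, Nat.mod_eq_of_lt h.1.2, Nat.mod_eq_of_lt h'.1.1,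
      Nat.mod_eq_of_lt h'.1.2] at heq
    rw [heq.1, heq.2]
  · rintro ⟨u, v⟩ h
    simp only [mem_filter, mem_univ, true_and, AddMonoidHom.mem_ker] at h
    have h : (a : ZMod d) * u + b * v = 0 := h
    refine ⟨(u.val, v.val), ?_, ?_⟩
    · simp only [mem_filter, mem_product, mem_range]
      refine ⟨⟨ZMod.val_lt u, ZMod.val_lt v⟩, ?_⟩
      rw [← ZMod.natCast_eq_zero_iff]
      push_cast
      simpa using h
    · simp

open Finset in
theorem aux_main (d a b : ℕ) (hd : 0 < d) (hab : a < b)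
    (hgcd : Nat.gcd a (Nat.gcd b d) = 1) (t : ℕ) :
    2 * #{p ∈ range (t * d + 1) ×ˢ range (t * d + 1) | p.1 + p.2 ≤ t * d ∧ d ∣ a * p.1 + b * p.2} =
      d * t ^ 2 + (Nat.gcd a d + Nat.gcd b d + Nat.gcd (b - a) d) * t + 2 := by
  have hdn : d ∣ t * d := Dvd.intro_left t rfl
  have hsq : ∑ x ∈ range (t * d), ∑ y ∈ range (t * d), (if d ∣ a * x + b * y then 1 else 0)
      = t * (t * d) := by
    have h1 : ∀ x, ∑ y ∈ range (t * d), (if d ∣ a * x + b * y then 1 else 0)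
        = t * ∑ y ∈ range d, (if d ∣ a * x + b * y then 1 else 0) := by
      intro x
      refine aux_periodic d (fun y => if d ∣ a * x + b * y then 1 else 0) ?_ t
      intro y
      simp only [mul_add, ← add_assoc, Nat.dvd_add_left (Dvd.intro_left b rfl : d ∣ b * d)]
    simp only [h1]
    rw [← Finset.mul_sum, aux_periodic d (fun x => ∑ y ∈ range d, (if d ∣ a * x + b * y then 1 else 0)),
      aux_square d a b hd hgcd]
    intro x
    refine Finset.sum_congr rfl fun y _ => ?_
    simp only [mul_add, add_right_comm _ (a * d), Nat.dvd_add_left (Dvd.intro_left a rfl : d ∣ a * d)]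
  have hline : ∀ k, ∑ x ∈ range (t * d), (if d ∣ k * x then 1 else 0) = t * Nat.gcd k d := by
    intro k
    rw [aux_periodic d (fun x => if d ∣ k * x then 1 else 0), aux_line d k hd]
    intro x
    simp only [mul_add, Nat.dvd_add_left (Dvd.intro_left k rfl : d ∣ k * d)]
  generalize hn : t * d = n at *
  have hS : #{p ∈ range (n + 1) ×ˢ range (n + 1) | d ∣ a * p.1 + b * p.2} =
      t * n + t * Nat.gcd a d + t * Nat.gcd b d + 1 := by
    have : #{p ∈ range (n + 1) ×ˢ range (n + 1) | d ∣ a * p.1 + b * p.2} =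
      ∑ x ∈ range (n + 1), ∑ y ∈ range (n + 1), (if d ∣ a * x + b * y then 1 else 0) := by
      rw [← Finset.sum_product', Finset.sum_boole, Nat.cast_id]
    rw [this]
    simp only [Finset.sum_range_succ, Finset.sum_add_distrib, hsq]
    simp only [Nat.dvd_add_left (hdn.mul_left b), Nat.dvd_add_right (hdn.mul_left a), hline,
      hdn.mul_left a, if_true]
    ring
  have hD : #{p ∈ range (n + 1) ×ˢ range (n + 1) | p.1 + p.2 = n ∧ d ∣ a * p.1 + b * p.2} =
      t * Nat.gcd (b - a) d + 1 := by
    have hl : t * Nat.gcd (b - a) d + 1 =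
        ∑ x ∈ range (n + 1), (if d ∣ (b - a) * x then 1 else 0) := by
      rw [Finset.sum_range_succ, hline, if_pos (hdn.mul_left (b - a))]
    rw [hl, Finset.sum_boole, Nat.cast_id]
    have hiff : ∀ x y, x + y = n → (d ∣ a * x + b * y ↔ d ∣ (b - a) * y) := by
      intro x y h
      obtain ⟨c, rfl⟩ := Nat.exists_eq_add_of_lt hab
      have : a * x + (a + c + 1) * y = a * n + (c + 1) * y := by rw [← h]; ring
      rw [this, Nat.dvd_add_right (hdn.mul_left a)]
      rw [show a + c + 1 - a = c + 1 by omega]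
    refine Finset.card_bij (fun p _ => p.2) ?_ ?_ ?_
    · rintro ⟨x, y⟩ h
      simp only [mem_filter, mem_product, mem_range] at h ⊢
      exact ⟨h.1.2, (hiff x y h.2.1).mp h.2.2⟩
    · rintro ⟨x, y⟩ h ⟨x', y'⟩ h' heq
      simp only [mem_filter, mem_product, mem_range] at h h' heq
      ext <;> simp <;> omega
    · intro y h
      simp only [mem_filter, mem_range] at h
      refine ⟨(n - y, y), ?_, rfl⟩
      simp only [mem_filter, mem_product, mem_range]
      exact ⟨⟨by omega, h.1⟩, by omega, (hiff (n - y) y (by omega)).mpr h.2⟩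
  have hT : #{p ∈ range (n + 1) ×ˢ range (n + 1) | p.1 + p.2 ≤ n ∧ d ∣ a * p.1 + b * p.2} =
      #{p ∈ range (n + 1) ×ˢ range (n + 1) | n ≤ p.1 + p.2 ∧ d ∣ a * p.1 + b * p.2} := by
    have hiff : ∀ x y, x ≤ n → y ≤ n → d ∣ a * x + b * y → d ∣ a * (n - x) + b * (n - y) := by
      intro x y hx hy h
      have : (a * x + b * y) + (a * (n - x) + b * (n - y)) = a * n + b * n := by
        obtain ⟨u, rfl⟩ := Nat.exists_eq_add_of_le hx
        rw [Nat.add_sub_cancel_left]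
        obtain ⟨v, hv⟩ := Nat.exists_eq_add_of_le hy
        rw [hv, Nat.add_sub_cancel_left, ← hv]
        nlinarith
      exact (Nat.dvd_add_right h).mp (this ▸ dvd_add (hdn.mul_left a) (hdn.mul_left b))
    refine Finset.card_nbij' (fun p => (n - p.1, n - p.2)) (fun p => (n - p.1, n - p.2)) ?_ ?_ ?_ ?_
    · rintro ⟨x, y⟩ h
      simp only [coe_filter, mem_product, mem_range, Set.mem_ofPred_eq] at h ⊢
      exact ⟨by omega, by omega, hiff x y (by omega) (by omega) h.2.2⟩
    · rintro ⟨x, y⟩ h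
      simp only [coe_filter, mem_product, mem_range, Set.mem_ofPred_eq] at h ⊢
      exact ⟨by omega, by omega, hiff x y (by omega) (by omega) h.2.2⟩
    · rintro ⟨x, y⟩ h
      simp only [coe_filter, mem_product, mem_range, Set.mem_ofPred_eq] at h
      ext <;> simp <;> omega
    · rintro ⟨x, y⟩ h
      simp only [coe_filter, mem_product, mem_range, Set.mem_ofPred_eq] at h
      ext <;> simp <;> omega
  have hU := Finset.card_union_add_card_inter
    {p ∈ range (n + 1) ×ˢ range (n + 1) | p.1 + p.2 ≤ n ∧ d ∣ a * p.1 + b * p.2}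
    {p ∈ range (n + 1) ×ˢ range (n + 1) | n ≤ p.1 + p.2 ∧ d ∣ a * p.1 + b * p.2}
  rw [← Finset.filter_or, ← Finset.filter_and, ← hT] at hU
  have e1 : ∀ p : ℕ × ℕ, ((p.1 + p.2 ≤ n ∧ d ∣ a * p.1 + b * p.2) ∨
      (n ≤ p.1 + p.2 ∧ d ∣ a * p.1 + b * p.2)) ↔ d ∣ a * p.1 + b * p.2 := by
    intro p
    have := le_total (p.1 + p.2) n
    tauto
  have e2 : ∀ p : ℕ × ℕ, ((p.1 + p.2 ≤ n ∧ d ∣ a * p.1 + b * p.2) ∧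
      (n ≤ p.1 + p.2 ∧ d ∣ a * p.1 + b * p.2)) ↔ (p.1 + p.2 = n ∧ d ∣ a * p.1 + b * p.2) := by
    intro p
    rw [le_antisymm_iff]
    tauto
  simp only [e1, e2] at hU
  rw [hS, hD] at hU
  rw [two_mul, ← hU, ← hn]
  ring

theorem aux_gcd1 (d a b lam : ℕ) (hd : 0 < d) (hgcd : Nat.gcd a (Nat.gcd b d) = 1)
    (hlamcong : b ≡ lam * (a / Nat.gcd a d) [MOD d / Nat.gcd a d]) :
    Nat.gcd lam (d / Nat.gcd a d) = Nat.gcd b d := by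
  have hg : 0 < Nat.gcd a d := Nat.gcd_pos_of_pos_right a hd
  have hc : Nat.Coprime (a / Nat.gcd a d) (d / Nat.gcd a d) := Nat.coprime_div_gcd_div_gcd hg
  have h1 : Nat.gcd b (d / Nat.gcd a d) = Nat.gcd lam (d / Nat.gcd a d) := by
    rw [hlamcong.gcd_eq, hc.gcd_mul_right_cancel]
  rw [← h1]
  have hbg : Nat.Coprime b (Nat.gcd a d) := by
    rw [Nat.Coprime, ← hgcd, ← Nat.gcd_assoc, ← Nat.gcd_assoc, Nat.gcd_comm b a]
  conv_rhs => rw [← Nat.mul_div_cancel' (Nat.gcd_dvd_right a d)]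
  rw [Nat.gcd_mul_right_right_of_gcd_eq_one hbg]

theorem aux_gcd2 (d a b lam : ℕ) (hd : 0 < d) (hab : a < b) (hgcd : Nat.gcd a (Nat.gcd b d) = 1)
    (hlamcong : b ≡ lam * (a / Nat.gcd a d) [MOD d / Nat.gcd a d]) :
    Int.gcd ((lam : ℤ) - (Nat.gcd a d : ℤ)) ((d / Nat.gcd a d : ℕ) : ℤ) = Nat.gcd (b - a) d := by
  have hg : 0 < Nat.gcd a d := Nat.gcd_pos_of_pos_right a hd
  have hc : Nat.Coprime (a / Nat.gcd a d) (d / Nat.gcd a d) := Nat.coprime_div_gcd_div_gcd hg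
  have hbg : Nat.Coprime (b - a) (Nat.gcd a d) := by
    have h0 : Nat.Coprime b (Nat.gcd a d) := by
      rw [Nat.Coprime, ← hgcd, ← Nat.gcd_assoc, ← Nat.gcd_assoc, Nat.gcd_comm b a]
    rw [Nat.Coprime, ← Nat.dvd_one, ← Nat.Coprime.gcd_eq_one h0]
    refine Nat.dvd_gcd ?_ (Nat.gcd_dvd_right _ _)
    have := dvd_add (Nat.gcd_dvd_left (b - a) (Nat.gcd a d))
      ((Nat.gcd_dvd_right (b - a) (Nat.gcd a d)).trans (Nat.gcd_dvd_left a d))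
    rwa [Nat.sub_add_cancel hab.le] at this
  conv_rhs => rw [← Nat.mul_div_cancel' (Nat.gcd_dvd_right a d)]
  rw [Nat.gcd_mul_right_right_of_gcd_eq_one hbg]
  have ha' : Nat.gcd a d * (a / Nat.gcd a d) = a := Nat.mul_div_cancel' (Nat.gcd_dvd_left a d)
  generalize Nat.gcd a d = g at *
  generalize d / g = d' at *
  generalize a / g = a' at *
  have hz : ((b - a : ℕ) : ℤ) ≡ ((lam : ℤ) - g) * a' [ZMOD d'] := by
    have h1 : (b : ℤ) ≡ (lam : ℤ) * a' [ZMOD d'] := by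
      exact_mod_cast (Int.natCast_modEq_iff.mpr hlamcong)
    rw [Nat.cast_sub hab.le, sub_mul]
    refine h1.sub ?_
    rw [← ha']; push_cast; rfl
  rw [← Int.gcd_natCast_natCast (b - a) d', ← Int.gcd_emod ((b - a : ℕ) : ℤ), hz, Int.gcd_emod]
  symm
  exact Int.gcd_mul_left_left_of_gcd_eq_one (by simpa using hc)


/-- Theorem 4.11(i): the Hilbert function of the GT-surface X_d is
HF(X_d,t) = (d·t² + θ(a,b,d)·t + 2)/2, where
θ(a,b,d) = gcd(a,d) + gcd(λ,d') + gcd(λ−gcd(a,d),d'). -/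
theorem stmt7 (d a b : ℕ) (hd : 3 ≤ d) (ha : 0 < a) (hab : a < b) (hbd : b < d)
    (hgcd : Nat.gcd a (Nat.gcd b d) = 1)
    (lam : ℕ) (hlam0 : 0 < lam) (hlamle : lam ≤ d / Nat.gcd a d)
    (hlamcong : b ≡ lam * (a / Nat.gcd a d) [MOD d / Nat.gcd a d])
    (t : ℕ) :
    2 * Set.ncard {y : ℕ × ℕ × ℕ |
        y.1 + y.2.1 + y.2.2 = t * d ∧ d ∣ a * y.2.1 + b * y.2.2} =
      d * t ^ 2 +
        (Nat.gcd a d + Nat.gcd lam (d / Nat.gcd a d) +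
          Int.gcd ((lam : ℤ) - (Nat.gcd a d : ℤ)) ((d / Nat.gcd a d : ℕ) : ℤ)) * t + 2 := by
  have hd0 : 0 < d := by omega
  rw [aux_gcd1 d a b lam hd0 hgcd hlamcong, aux_gcd2 d a b lam hd0 hab hgcd hlamcong,
    ← aux_main d a b hd0 hab hgcd t, ← Set.ncard_coe_finset]
  congr 1
  refine Set.ncard_congr (fun y _ => y.2) ?_ ?_ ?_
  · rintro ⟨x, y, z⟩ h
    simp only [Set.mem_ofPred_eq] at h
    simp only [Finset.coe_filter, Finset.mem_product, Finset.mem_range, Set.mem_ofPred_eq]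
    exact ⟨by omega, by omega, h.2⟩
  · rintro ⟨x, y, z⟩ ⟨x', y', z'⟩ h h' heq
    simp only [Set.mem_ofPred_eq, Prod.mk.injEq] at h h' heq
    simp only [Prod.mk.injEq]
    omega
  · rintro ⟨y, z⟩ h
    simp only [Finset.coe_filter, Finset.mem_product, Finset.mem_range, Set.mem_ofPred_eq] at h
    refine ⟨(t * d - (y + z), y, z), ?_, rfl⟩
    simp only [Set.mem_ofPred_eq]
    exact ⟨by omega, h.2.2⟩
end

section
/- Let d ≥ 3 be a prime number and let a, b be integers with 0 < a < b < d. Then 2 · #{(y₀,y₁,y₂) ∈ ℕ³ : y₀+y₁+y₂ = d and d ∣ a·y₁ + b·y₂} = d + 5; that is, the number μ_d of degree-d monomials in ℂ[x₀,x₁,x₂] invariant under the cyclic group ⟨diag(1, e^a, e^b)⟩ (e a primitive d-th root of unity) equals (d+5)/2. -/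
lemma aux_ex (d a b : ℕ) (hp : Nat.Prime d) (hb : 0 < b) (hbd : b < d) (u : ℕ) :
    ∃ v, v < d ∧ d ∣ a * u + b * v := by
  haveI := Fact.mk hp
  have hb0 : (b : ZMod d) ≠ 0 := by
    rw [Ne, ZMod.natCast_eq_zero_iff]
    exact Nat.not_dvd_of_pos_of_lt hb hbd
  refine ⟨(-(a * u / b : ZMod d)).val, ZMod.val_lt _, ?_⟩
  rw [← ZMod.natCast_eq_zero_iff]
  push_cast
  rw [ZMod.natCast_val, ZMod.cast_id]
  field_simp
  ring

lemma aux_uniq (d a b : ℕ) (hp : Nat.Prime d) (hb : 0 < b) (hbd : b < d) (u v w : ℕ)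
    (hv : v < d) (hw : w < d) (h1 : d ∣ a * u + b * v) (h2 : d ∣ a * u + b * w) : v = w := by
  have h : a * u + b * v ≡ a * u + b * w [MOD d] :=
    ((Nat.modEq_zero_iff_dvd).2 h1).trans ((Nat.modEq_zero_iff_dvd).2 h2).symm
  have h3 := Nat.ModEq.add_left_cancel' _ h
  have hc : Nat.gcd d b = 1 :=
    (hp.coprime_iff_not_dvd).2 (Nat.not_dvd_of_pos_of_lt hb hbd)
  exact Nat.ModEq.eq_of_lt_of_lt (Nat.ModEq.cancel_left_of_coprime hc h3) hv hw

/-- Prime case of Corollary 4.12(i): for d prime, the number of degree-d monomials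
invariant under ⟨diag(1,e^a,e^b)⟩ is μ_d = (d+5)/2. -/
theorem stmt9 (d a b : ℕ) (hd : 3 ≤ d) (hp : Nat.Prime d)
    (ha : 0 < a) (hab : a < b) (hbd : b < d) :
    2 * Set.ncard {y : ℕ × ℕ × ℕ |
        y.1 + y.2.1 + y.2.2 = d ∧ d ∣ a * y.2.1 + b * y.2.2} = d + 5 := by
  have hb : 0 < b := by omega
  choose g hg1 hg2 using aux_ex d a b hp hb hbd
  have nd : ∀ x y : ℕ, 0 < x → x < d → 0 < y → y < d → ¬ d ∣ x * y := by
    intro x y hx hx' hy hy' h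
    rcases hp.dvd_mul.1 h with h | h
    · exact Nat.not_dvd_of_pos_of_lt hx hx' h
    · exact Nat.not_dvd_of_pos_of_lt hy hy' h
  have gpos : ∀ u, 0 < u → u < d → 0 < g u := by
    intro u h1 h2
    rcases Nat.eq_zero_or_pos (g u) with h | h
    · have := hg2 u
      rw [h] at this
      exact absurd (by simpa using this) (nd a u ha (by omega) h1 h2)
    · exact h
  have gne : ∀ u, 0 < u → u < d → u + g u ≠ d := by
    intro u h1 h2 h
    obtain ⟨k, rfl⟩ := Nat.exists_eq_add_of_lt hab
    apply nd (k+1) (g u) (by omega) (by omega) (gpos u h1 h2) (hg1 u)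
    have e : a * u + (a + k + 1) * g u = a * d + (k+1) * g u := by rw [← h]; ring
    have := hg2 u
    rw [e] at this
    exact (Nat.dvd_add_right (Dvd.intro_left _ rfl)).1 this
  have gsym : ∀ u, 0 < u → u < d → g (d - u) = d - g u := by
    intro u h1 h2
    have := gpos u h1 h2
    have h3 := hg1 u
    apply aux_uniq d a b hp hb hbd (d-u) _ _ (hg1 _) (by omega) (hg2 _)
    have e : (a * (d - u) + b * (d - g u)) + (a * u + b * g u) = (a + b) * d := by
      obtain ⟨p, hp⟩ := Nat.exists_eq_add_of_lt h2
      obtain ⟨q, hq⟩ := Nat.exists_eq_add_of_lt h3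
      have e1 : d - u = p + 1 := by omega
      have e2 : d - g u = q + 1 := by omega
      rw [e1, e2, add_mul]
      nth_rewrite 1 [hp]
      rw [hq]
      ring
    exact (Nat.dvd_add_left (hg2 u)).1 (e ▸ Dvd.intro_left _ rfl)
  set A := (Finset.Ico 1 d).filter (fun u => u + g u < d) with hA
  set B := (Finset.Ico 1 d).filter (fun u => ¬ u + g u < d) with hB
  have hAB : A.card + B.card = d - 1 := by
    rw [hA, hB, Finset.card_filter_add_card_filter_not]; simp
  have hEq : A.card = B.card := by
    apply Finset.card_bij' (fun u _ => d - u) (fun u _ => d - u)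
    · intro u hu
      simp only [hA, hB, Finset.mem_filter, Finset.mem_Ico] at hu ⊢
      rw [gsym u (by omega) (by omega)]
      omega
    · intro u hu
      simp only [hA, hB, Finset.mem_filter, Finset.mem_Ico] at hu ⊢
      have := gne u (by omega) (by omega)
      have := hg1 u
      rw [gsym u (by omega) (by omega)]
      omega
    · intro u hu
      simp only [hA, Finset.mem_filter, Finset.mem_Ico] at hu
      omega
    · intro u hu
      simp only [hB, Finset.mem_filter, Finset.mem_Ico] at hu
      omega
  set F : Finset (ℕ × ℕ × ℕ) := A.image (fun u => (d - u - g u, u, g u)) with hF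
  have hFc : F.card = A.card := by
    apply Finset.card_image_of_injective
    intro u v h
    simp only [Prod.mk.injEq] at h
    exact h.2.1
  have memF : ∀ y ∈ F, 0 < y.2.1 ∧ y.2.1 < d ∧ 0 < y.2.2 := by
    intro y hy
    simp only [hF, hA, Finset.mem_image, Finset.mem_filter, Finset.mem_Ico] at hy
    obtain ⟨u, hu, rfl⟩ := hy
    exact ⟨by simp; omega, by simp; omega, gpos u (by omega) (by omega)⟩
  have key : {y : ℕ × ℕ × ℕ |
        y.1 + y.2.1 + y.2.2 = d ∧ d ∣ a * y.2.1 + b * y.2.2} =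
      ((insert (d,0,0) (insert (0,d,0) (insert (0,0,d) F)) : Finset (ℕ × ℕ × ℕ)) :
        Set (ℕ × ℕ × ℕ)) := by
    ext ⟨x, u, v⟩
    simp only [Set.mem_setOf_eq, Finset.coe_insert, Set.mem_insert_iff, Finset.mem_coe,
      Prod.mk.injEq]
    constructor
    · rintro ⟨h1, h2⟩
      by_cases hu0 : u = 0
      · subst hu0
        by_cases hv0 : v = 0
        · left; omega
        by_cases hvd : v = d
        · right; right; left; omega
        · exact absurd (by simpa using h2) (nd b v hb hbd (by omega) (by omega))
      by_cases hud : u = d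
      · right; left; omega
      have hv : v = g u := by
        exact aux_uniq d a b hp hb hbd u v (g u) (by omega) (hg1 u) h2 (hg2 u)
      right; right; right
      have := gne u (by omega) (by omega)
      simp only [hF, hA, Finset.mem_image, Finset.mem_filter, Finset.mem_Ico]
      refine ⟨u, by omega, ?_⟩
      rw [Prod.mk.injEq, Prod.mk.injEq]
      exact ⟨by omega, rfl, hv.symm⟩
    · rintro (⟨rfl, rfl, rfl⟩ | ⟨rfl, rfl, rfl⟩ | ⟨rfl, rfl, rfl⟩ | h)
      · simp
      · simp
      · simp
      · simp only [hF, hA, Finset.mem_image, Finset.mem_filter, Finset.mem_Ico,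
          Prod.mk.injEq] at h
        obtain ⟨u', hu, h1, rfl, rfl⟩ := h
        exact ⟨by omega, hg2 u'⟩
  rw [key, Set.ncard_coe_finset, Finset.card_insert_of_notMem, Finset.card_insert_of_notMem,
    Finset.card_insert_of_notMem]
  · omega
  · intro h
    have := memF _ h
    simp at this
  · intro h
    rw [Finset.mem_insert] at h
    rcases h with h | h
    · simp only [Prod.mk.injEq] at h; omega
    · have := memF _ h
      simp at this
  · intro h
    rw [Finset.mem_insert, Finset.mem_insert] at h
    rcases h with h | h | h
    · simp only [Prod.mk.injEq] at h; omega
    · simp only [Prod.mk.injEq] at h; omega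
    · have := memF _ h
      simp at this
end

section
/- Fix integers n ≥ 1, d ≥ 1 and natural numbers α_0,…,α_n. Let G = {a ∈ ℕ^{n+1} : |a| = d and d ∣ ⟨α,a⟩} and μ = #G. For an integer t ≥ 1 let B_t = {b ∈ ℕ^{n+1} : |b| = t·d and d ∣ ⟨α,b⟩}, and for b ∈ B_t let N(b) be the number of multisets of size t with elements in G whose (elementwise) sum equals b. Then N(b) ≥ 1 for every b ∈ B_t, and binom(μ + t − 1, t) − #B_t = Σ_{b ∈ B_t} (N(b) − 1). -/
lemma exists_piece (k d : ℕ) (hd : 1 ≤ d) (α b : Fin k → ℕ) (hb : 2 * d - 1 ≤ ∑ i, b i) :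
    ∃ g : Fin k → ℕ, g ≤ b ∧ ∑ i, g i = d ∧ d ∣ ∑ i, α i * g i := by
  classical
  obtain ⟨u, -, hu, hs⟩ := Int.erdos_ginzburg_ziv (n := d)
    (s := (Finset.univ : Finset (Σ i : Fin k, Fin (b i)))) (fun x => (α x.1 : ℤ))
    (by simpa using hb)
  refine ⟨fun i => (u.filter (fun x => x.1 = i)).card, ?_, ?_, ?_⟩
  · intro i
    calc (u.filter (fun x => x.1 = i)).card
        ≤ ((Finset.univ : Finset (Fin (b i))).image
            (fun j => (⟨i, j⟩ : Σ i : Fin k, Fin (b i)))).card := by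
          apply Finset.card_le_card
          rintro ⟨i', j⟩ h
          simp only [Finset.mem_filter] at h
          obtain ⟨_, rfl⟩ := h
          simp
      _ ≤ _ := Finset.card_image_le
      _ = b i := by simp
  · rw [← hu]
    exact (Finset.card_eq_sum_card_fiberwise (fun _ _ => Finset.mem_coe.2 (Finset.mem_univ _))).symm
  · have h2 : ∑ x ∈ u, α x.1 = ∑ i, α i * (u.filter (fun x => x.1 = i)).card := by
      rw [← Finset.sum_fiberwise u (fun x => x.1)]
      refine Finset.sum_congr rfl fun i _ => ?_
      rw [Finset.sum_congr rfl (g := fun _ => α i)]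
      · simp [mul_comm]
      · intro x hx
        rw [(Finset.mem_filter.1 hx).2]
    rw [← h2]
    exact_mod_cast hs

lemma exists_decomp (k d : ℕ) (hd : 1 ≤ d) (α : Fin k → ℕ) (t : ℕ) :
    ∀ b : Fin k → ℕ, ∑ i, b i = (t + 1) * d → d ∣ ∑ i, α i * b i →
    ∃ s : Multiset (Fin k → ℕ), Multiset.card s = t + 1 ∧
      (∀ x ∈ s, ∑ i, x i = d ∧ d ∣ ∑ i, α i * x i) ∧ s.sum = b := by
  induction t with
  | zero =>
    intro b h1 h2
    exact ⟨{b}, by simp, by simpa using ⟨by simpa using h1, h2⟩, by simp⟩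
  | succ t ih =>
    intro b h1 h2
    obtain ⟨g, hg, hgd, hgα⟩ := exists_piece k d hd α b (by rw [h1]; nlinarith [Nat.sub_le (2*d) 1])
    obtain ⟨c, rfl⟩ := exists_add_of_le hg
    simp only [Pi.add_apply, mul_add, Finset.sum_add_distrib] at h1 h2
    obtain ⟨s, hs, hs', hs''⟩ := ih c (by rw [hgd] at h1; linarith) ((Nat.dvd_add_right hgα).1 h2)
    refine ⟨g ::ₘ s, by simp [hs], ?_, by simp [hs'']⟩
    intro x hx
    rcases Multiset.mem_cons.1 hx with rfl | hx
    · exact ⟨hgd, hgα⟩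
    · exact hs' x hx

lemma inv_sum_mem (k d : ℕ) (α : Fin k → ℕ) (s : Multiset (Fin k → ℕ)) :
    (∀ x ∈ s, ∑ i, x i = d ∧ d ∣ ∑ i, α i * x i) →
    ∑ i, s.sum i = Multiset.card s * d ∧ d ∣ ∑ i, α i * s.sum i := by
  induction s using Multiset.induction with
  | empty => simp
  | cons a s ih =>
    intro h
    obtain ⟨h1, h2⟩ := ih fun x hx => h x (Multiset.mem_cons_of_mem hx)
    obtain ⟨h3, h4⟩ := h a (Multiset.mem_cons_self _ _)
    simp only [Multiset.sum_cons, Pi.add_apply, mul_add, Finset.sum_add_distrib,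
      Multiset.card_cons]
    exact ⟨by rw [h1, h3]; ring, dvd_add h4 h2⟩

lemma ncard_eq {A : Type*} [AddCommMonoid A] [DecidableEq A] (G : Finset A) (t : ℕ) (b : A) :
    Set.ncard {s : Multiset A | Multiset.card s = t ∧ (∀ x ∈ s, x ∈ G) ∧ s.sum = b} =
    ((Finset.univ : Finset (Sym G t)).filter
      (fun s : Sym G t => ((s : Multiset G).map Subtype.val).sum = b)).card := by
  rw [← Set.ncard_coe_finset]
  symm
  rw [← Set.ncard_image_of_injective (f := fun s : Sym G t => (s : Multiset G).map Subtype.val)]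
  · congr 1
    ext s
    simp only [Set.mem_image, Finset.mem_coe, Finset.mem_filter, Finset.mem_univ, true_and,
      Set.mem_setOf_eq]
    constructor
    · rintro ⟨u, hu, rfl⟩
      refine ⟨by simp, ?_, hu⟩
      intro x hx
      obtain ⟨y, _, rfl⟩ := Multiset.mem_map.1 hx
      exact y.2
    · rintro ⟨h1, h2, h3⟩
      lift s to Multiset G using h2
      exact ⟨⟨s, by simpa using h1⟩, h3, rfl⟩
  · intro x y h
    exact Sym.coe_injective (Multiset.map_injective Subtype.val_injective h)


/-- Proposition 4.7: every Λ-invariant exponent vector of degree t·d is a sum of a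
size-t multiset of degree-d invariant exponent vectors, and
binom(μ+t−1,t) − #B_t = Σ_{b ∈ B_t} (N(b) − 1). -/
theorem stmt10 (n d : ℕ) (hn : 1 ≤ n) (hd : 1 ≤ d) (α : Fin (n + 1) → ℕ)
    (t : ℕ) (ht : 1 ≤ t) :
    let G := (Finset.Nat.antidiagonalTuple (n + 1) d).filter
      (fun a => d ∣ ∑ i, α i * a i)
    let μ := G.card
    let B := (Finset.Nat.antidiagonalTuple (n + 1) (t * d)).filter
      (fun b => d ∣ ∑ i, α i * b i)
    let N : (Fin (n + 1) → ℕ) → ℕ := fun b =>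
      Set.ncard {s : Multiset (Fin (n + 1) → ℕ) |
        Multiset.card s = t ∧ (∀ x ∈ s, x ∈ G) ∧ s.sum = b}
    (∀ b ∈ B, 1 ≤ N b) ∧
      ((μ + t - 1).choose t : ℤ) - B.card = ∑ b ∈ B, ((N b : ℤ) - 1) := by
  intro G μ B N
  have hG : ∀ x, x ∈ G ↔ ∑ i, x i = d ∧ d ∣ ∑ i, α i * x i := by
    intro x; simp [G, Finset.Nat.mem_antidiagonalTuple]
  have hB : ∀ x, x ∈ B ↔ ∑ i, x i = t * d ∧ d ∣ ∑ i, α i * x i := by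
    intro x; simp [B, Finset.Nat.mem_antidiagonalTuple]
  have hN : ∀ b, N b = ((Finset.univ : Finset (Sym G t)).filter
      (fun s : Sym G t => ((s : Multiset G).map Subtype.val).sum = b)).card := fun b => ncard_eq G t b
  constructor
  · intro b hb
    obtain ⟨h1, h2⟩ := (hB b).1 hb
    obtain ⟨t, rfl⟩ := Nat.exists_eq_add_of_le' ht
    obtain ⟨s, hs, hs', hs''⟩ := exists_decomp (n + 1) d hd α t b h1 h2
    have h3 : ∀ x ∈ s, x ∈ G := fun x hx => (hG x).2 (hs' x hx)
    rw [hN, Nat.one_le_iff_ne_zero, Finset.card_ne_zero]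
    lift s to Multiset G using h3
    exact ⟨⟨s, by simpa using hs⟩, Finset.mem_filter.2 ⟨Finset.mem_univ _, hs''⟩⟩
  · have key : (μ + t - 1).choose t = ∑ b ∈ B, N b := by
      have h := Sym.card_sym_eq_choose (α := G) t
      rw [Fintype.card_coe] at h
      rw [← h, ← Finset.card_univ, Finset.sum_congr rfl fun b _ => hN b]
      apply Finset.card_eq_sum_card_fiberwise
      intro s _
      rw [Finset.mem_coe, hB]
      have := inv_sum_mem (n + 1) d α ((s : Multiset G).map Subtype.val) (by
        intro x hx
        obtain ⟨y, _, rfl⟩ := Multiset.mem_map.1 hx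
        exact (hG _).1 y.2)
      simpa using this
    rw [key, Finset.sum_sub_distrib]
    simp
end

section
/- Let t ≥ 1 and let w ∈ ℕ³ have exactly one coordinate equal to zero, say w_k = 0 and w_i, w_j > 0 where {i,j,k} = {1,2,3}. Then w ∈ H_{3t} if and only if 3t ∣ w_i and 3t ∣ w_j. -/
/-- `HH t` is the submonoid H_{3t} of ℕ³ of the paper: `HH 1` = H₃ is generated by
(3,0,0),(0,3,0),(0,0,3),(1,1,1); for t ≥ 2, H_{3t} is generated by (3t,0,0),(0,3t,0),
(0,0,3t) together with (1,1,1) + H_{3(t−1)}.  (Here `HH 0 = ⊥ = {0}`, so that the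
t = 1 case of the recursion reproduces exactly H₃.) -/
def HH : ℕ → AddSubmonoid (Fin 3 → ℕ)
  | 0 => ⊥
  | (t + 1) => AddSubmonoid.closure
      ({Pi.single 0 (3 * (t + 1)), Pi.single 1 (3 * (t + 1)),
          Pi.single 2 (3 * (t + 1))} ∪
        (fun h => (fun _ => 1) + h) '' ((HH t : AddSubmonoid (Fin 3 → ℕ)) : Set (Fin 3 → ℕ)))

theorem HH_fwd (t : ℕ) (w : Fin 3 → ℕ) (hw : w ∈ HH (t + 1)) :
    (∀ l, 3 * (t + 1) ∣ w l) ∨ (∀ l, 0 < w l) := by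
  rw [HH] at hw
  induction hw using AddSubmonoid.closure_induction with
  | mem x hx =>
    rcases hx with hx | ⟨h, _, rfl⟩
    · left
      intro l
      simp only [Set.mem_insert_iff, Set.mem_singleton_iff] at hx
      rcases hx with rfl | rfl | rfl <;> simp only [Pi.single_apply] <;> split_ifs <;> simp
    · right
      intro l
      simp only [Pi.add_apply]
      omega
  | zero => left; simp
  | add x y _ _ hx hy =>
    rcases hx with hx | hx
    · rcases hy with hy | hy
      · left
        intro l
        exact dvd_add (hx l) (hy l)
      · right
        intro l
        exact Nat.add_pos_right _ (hy l)
    · right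
      intro l
      exact Nat.add_pos_left (hx l) _

theorem HH_bwd (t : ℕ) (w : Fin 3 → ℕ) (hw : ∀ l, 3 * (t + 1) ∣ w l) : w ∈ HH (t + 1) := by
  have hg : ∀ l : Fin 3, (Pi.single l (3 * (t + 1)) : Fin 3 → ℕ) ∈ HH (t + 1) := by
    intro l
    rw [HH]
    apply AddSubmonoid.subset_closure
    left
    fin_cases l <;> simp
  choose c hc using hw
  have : w = ∑ l, c l • (Pi.single l (3 * (t + 1)) : Fin 3 → ℕ) := by
    funext m
    simp [Finset.sum_apply, Pi.single_apply, hc m, mul_comm]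
  rw [this]
  exact sum_mem fun l _ => nsmul_mem (hg l) _

/-- Lemma 5.4: an element of ℕ³ with exactly one zero coordinate belongs to H_{3t}
if and only if its two nonzero coordinates are multiples of 3t. -/
theorem stmt12 (t : ℕ) (ht : 1 ≤ t) (w : Fin 3 → ℕ) (i j k : Fin 3)
    (hij : i ≠ j) (hik : i ≠ k) (hjk : j ≠ k)
    (hwk : w k = 0) (hwi : 0 < w i) (hwj : 0 < w j) :
    w ∈ HH t ↔ (3 * t ∣ w i ∧ 3 * t ∣ w j) := by
  obtain ⟨s, rfl⟩ : ∃ s, t = s + 1 := ⟨t - 1, by omega⟩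
  constructor
  · intro hw
    rcases HH_fwd s w hw with h | h
    · exact ⟨h i, h j⟩
    · have := h k
      omega
  · rintro ⟨h1, h2⟩
    apply HH_bwd
    intro l
    have hl : l = i ∨ l = j ∨ l = k := by omega
    rcases hl with rfl | rfl | rfl
    · exact h1
    · exact h2
    · simp [hwk]
end

section
/- Let t ≥ 1 and let w ∈ H_{3t} have exactly one nonzero coordinate, say w_i > 0 and the other two coordinates equal to 0. Then 3t ∣ w_i; more precisely w = A·f_i for some A ∈ ℕ, where f₁ = (3t,0,0), f₂ = (0,3t,0), f₃ = (0,0,3t). -/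
/-- Remark 5.6: an element of H_{3t} with exactly one nonzero coordinate is a
multiple of the corresponding generator fᵢ = 3t·eᵢ; in particular 3t ∣ wᵢ. -/
theorem stmt13 (t : ℕ) (ht : 1 ≤ t) (w : Fin 3 → ℕ) (hw : w ∈ HH t)
    (i j k : Fin 3) (hij : i ≠ j) (hik : i ≠ k) (hjk : j ≠ k)
    (hwi : 0 < w i) (hwj : w j = 0) (hwk : w k = 0) :
    3 * t ∣ w i ∧ ∃ A : ℕ, w = A • Pi.single i (3 * t) := by
  obtain ⟨t, rfl⟩ : ∃ s, t = s + 1 := ⟨t - 1, by omega⟩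
  have key : 3 * (t + 1) ∣ w i := by
    have : ∀ v ∈ HH (t + 1), v j = 0 → 3 * (t + 1) ∣ v i := by
      intro v hv
      rw [HH] at hv
      induction hv using AddSubmonoid.closure_induction with
      | mem x hx =>
        intro h0
        rcases hx with hx | ⟨h, -, rfl⟩
        · rcases hx with rfl | rfl | rfl <;> rw [Pi.single_apply] <;> split_ifs <;> simp
        · simp at h0
      | zero => intro _; simp
      | add x y _ _ hx hy =>
        intro h0
        simp only [Pi.add_apply] at h0 ⊢
        exact dvd_add (hx (by omega)) (hy (by omega))
    exact this w hw hwj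
  refine ⟨key, ?_⟩
  obtain ⟨A, hA⟩ := key
  refine ⟨A, ?_⟩
  funext l
  have hl : l = i ∨ l = j ∨ l = k := by omega
  rcases hl with rfl | rfl | rfl
  · simp [hA, mul_comm]
  · simp [hwj, hij.symm]
  · simp [hwk, hik.symm]
end

section
/- Let t ≥ 1 and let w ∈ ℕ³ have exactly one coordinate equal to zero, say w_k = 0 and w_i, w_j > 0 where {i,j,k} = {1,2,3}. Then either w ∈ H_{3t}, or both w + f_i ∉ H_{3t} and w + f_j ∉ H_{3t}. -/
theorem HH_dvd (s : ℕ) (x : Fin 3 → ℕ) (hx : x ∈ HH (s + 1)) :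
    (∀ l, 0 < x l) ∨ (∀ l, 3 * (s + 1) ∣ x l) := by
  rw [HH] at hx
  induction hx using AddSubmonoid.closure_induction with
  | mem y hy =>
    rcases hy with (rfl | rfl | rfl) | ⟨h, -, rfl⟩
    · right; intro l; fin_cases l <;> simp
    · right; intro l; fin_cases l <;> simp
    · right; intro l; fin_cases l <;> simp
    · left; intro l; simp only [Pi.add_apply]; omega
  | zero => right; intro l; simp
  | add a b _ _ ha hb =>
    rcases ha with ha | ha
    · left; intro l; have := ha l; simp only [Pi.add_apply]; omega
    · rcases hb with hb | hb
      · left; intro l; have := hb l; simp only [Pi.add_apply]; omega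
      · right; intro l; exact dvd_add (ha l) (hb l)

theorem HH_of_dvd (s : ℕ) (x : Fin 3 → ℕ) (hx : ∀ l, 3 * (s + 1) ∣ x l) : x ∈ HH (s + 1) := by
  choose c hc using hx
  have e : x = c 0 • Pi.single 0 (3 * (s + 1)) + c 1 • Pi.single 1 (3 * (s + 1))
      + c 2 • Pi.single 2 (3 * (s + 1)) := by
    funext l
    fin_cases l <;> simp [hc, mul_comm]
  rw [e, HH]
  refine add_mem (add_mem ?_ ?_) ?_ <;>
    exact nsmul_mem (AddSubmonoid.subset_closure (by simp)) _

theorem HH_key (s : ℕ) (w : Fin 3 → ℕ) (i k : Fin 3) (hik : i ≠ k) (hwk : w k = 0)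
    (h : w + Pi.single i (3 * (s + 1)) ∈ HH (s + 1)) : w ∈ HH (s + 1) := by
  apply HH_of_dvd
  rcases HH_dvd s _ h with h | h
  · have := h k
    simp [hwk, hik.symm] at this
  · intro l
    have hl := h l
    by_cases e : l = i
    · subst e
      simpa using hl
    · simpa [e] using hl

/-- Corollary 5.5: for w ∈ ℕ³ with exactly one zero coordinate (w_k = 0, w_i, w_j > 0),
either w ∈ H_{3t}, or both w + f_i ∉ H_{3t} and w + f_j ∉ H_{3t}. -/
theorem stmt14 (t : ℕ) (ht : 1 ≤ t) (w : Fin 3 → ℕ) (i j k : Fin 3)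
    (hij : i ≠ j) (hik : i ≠ k) (hjk : j ≠ k)
    (hwk : w k = 0) (hwi : 0 < w i) (hwj : 0 < w j) :
    w ∈ HH t ∨
      (w + Pi.single i (3 * t) ∉ HH t ∧ w + Pi.single j (3 * t) ∉ HH t) := by
  obtain ⟨s, rfl⟩ : ∃ s, t = s + 1 := ⟨t - 1, by omega⟩
  by_cases hw : w ∈ HH (s + 1)
  · exact Or.inl hw
  · exact Or.inr ⟨fun h => hw (HH_key s w i k hik hwk h), fun h => hw (HH_key s w j k hjk hwk h)⟩
end

section
/- The additive submonoid of ℕ³ generated by (3,0,0), (0,3,0), (0,0,3) and (1,1,1) equals the set {(a₀,a₁,a₂) ∈ ℕ³ : 3 ∣ a₀+a₁+a₂ and 3 ∣ a₁+2a₂}. -/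
/-- Example 3.2: the additive submonoid of ℕ³ generated by (3,0,0), (0,3,0), (0,0,3)
and (1,1,1) is exactly {(a₀,a₁,a₂) : 3 ∣ a₀+a₁+a₂ and 3 ∣ a₁+2a₂}. -/
theorem stmt19 :
    (AddSubmonoid.closure
        {Pi.single 0 3, Pi.single 1 3, Pi.single 2 3,
          (fun _ => 1 : Fin 3 → ℕ)} : Set (Fin 3 → ℕ)) =
      {a : Fin 3 → ℕ | 3 ∣ a 0 + a 1 + a 2 ∧ 3 ∣ a 1 + 2 * a 2} := by
  ext a
  simp only [SetLike.mem_coe, Set.mem_setOf_eq]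
  constructor
  · intro h
    induction h using AddSubmonoid.closure_induction with
    | mem x hx =>
      simp only [Set.mem_insert_iff, Set.mem_singleton_iff] at hx
      rcases hx with rfl | rfl | rfl | rfl <;> simp [Pi.single_apply]
    | zero => simp
    | add x y _ _ hx hy =>
      simp only [Pi.add_apply]
      omega
  · rintro ⟨h1, h2⟩
    have e : a = (a 0 / 3) • (Pi.single 0 3 : Fin 3 → ℕ) + (a 1 / 3) • (Pi.single 1 3 : Fin 3 → ℕ)
        + (a 2 / 3) • (Pi.single 2 3 : Fin 3 → ℕ) + (a 0 % 3) • (fun _ => 1 : Fin 3 → ℕ) := by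
      funext i
      fin_cases i <;> simp [Pi.single_apply] <;> omega
    rw [e]
    refine add_mem (add_mem (add_mem ?_ ?_) ?_) ?_ <;>
      exact nsmul_mem (AddSubmonoid.subset_closure (by simp)) _
end
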